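/- Let R be a unital ring, n ≥ 1, and let (C, (ι_i)_{i∈{1,…,n}}) be a coproduct in the category of unital T(R)-modules of n copies of T(R). Then: (i) the set Abs(C) of absorbers of C is a nonempty sub-heap of C, and for any a ∈ Abs(C) the retract group G(Abs(C); a) is isomorphic to ℤ^(n−1); (ii) the quotient heap C/Abs(C), with zero element the class Abs(C), addition [x̄, Abs(C), ȳ], and the induced R-action, is a unital left R-module isomorphic to the free R-module R^n. -/

import Mathlib

/-- A ternary operation is a heap operation if it is associative and
satisfies the Mal'cev identities. -/
def IsHeap {H : Type*} (op : H → H → H → H) : Prop :=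
  (∀ a b c d e : H, op (op a b c) d e = op a b (op c d e)) ∧
  (∀ a b : H, op a b b = a) ∧ (∀ a b : H, op b b a = a)

/-- An Abelian heap is a heap whose ternary operation satisfies
`[a,b,c] = [c,b,a]`. -/
def IsAbelianHeap {H : Type*} (op : H → H → H → H) : Prop :=
  IsHeap op ∧ ∀ a b c : H, op a b c = op c b a

/-- `(M, op, sm)` is a unital module over the truss `T(R)` associated to the
ring `R`: `M` is an Abelian heap and the action `sm` satisfies
`r·(s·m) = (rs)·m`, `(r - s + t)·m = [r·m, s·m, t·m]`,
`r·[m,m',m''] = [r·m, r·m', r·m'']` and `1·m = m`. -/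
def IsTRMod {R M : Type*} [Ring R] (op : M → M → M → M) (sm : R → M → M) : Prop :=
  IsAbelianHeap op ∧
  (∀ (r s : R) (m : M), sm r (sm s m) = sm (r * s) m) ∧
  (∀ (r s t : R) (m : M), sm (r - s + t) m = op (sm r m) (sm s m) (sm t m)) ∧
  (∀ (r : R) (m m' m'' : M), sm r (op m m' m'') = op (sm r m) (sm r m') (sm r m'')) ∧
  (∀ m : M, sm (1 : R) m = m)

/-- A morphism of modules over the truss `T(R)`: a map preserving both the
ternary heap operation and the `R`-action. -/
def IsTRModHom {R M N : Type*} [Ring R] (opM : M → M → M → M) (smM : R → M → M)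
    (opN : N → N → N → N) (smN : R → N → N) (f : M → N) : Prop :=
  (∀ a b c : M, f (opM a b c) = opN (f a) (f b) (f c)) ∧
  (∀ (r : R) (m : M), f (smM r m) = smN r (f m))

/-- The set of absorbers of a module over the truss `T(R)`. -/
def absSet {R M : Type*} [Ring R] (sm : R → M → M) : Set M :=
  {e : M | ∀ r : R, sm r e = e}

/-!
A `T(R)`-morphism out of `T(R)` is determined by the image of `1`, which is arbitrary, so `C` is the
free `T(R)`-module on the elements `ι i 1`. For every `m`, the element `0 · m` is an absorber, and
`m ↦ 0 · m` is the universal morphism to a module with trivial action, while `C → C/Abs(C)` is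
the universal morphism to an `R`-module. Hence `Abs(C)` is the free Abelian heap and `C/Abs(C)` the
free `R`-module on the images of the generators, and making one generator of a free Abelian heap
the neutral element of the retract leaves a free Abelian group on the others.
-/

open Module

universe u v w

section AbelianHeap

/-- The heap of an Abelian group, `[a, b, c] = a - b + c`; for a ring `R` it underlies the truss
`T(R)`. -/
abbrev addHeap (G : Type*) [AddCommGroup G] : G → G → G → G :=
  fun a b c => a - b + c

theorem isAbelianHeap_addHeap (G : Type*) [AddCommGroup G] : IsAbelianHeap (addHeap G) := by
  refine ⟨⟨fun a b c d e => ?_, fun a b => ?_, fun a b => ?_⟩, fun a b c => ?_⟩ <;>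
    simp only [addHeap] <;> abel

/-- The retract `G(H; e)` of an Abelian heap: the group `a + b = [a, e, b]` with zero `e`. -/
abbrev IsAbelianHeap.retract {H : Type*} {op : H → H → H → H} (h : IsAbelianHeap op) (e : H) :
    AddCommGroup H where
  add a b := op a e b
  zero := e
  neg a := op e a e
  add_assoc _ _ _ := h.1.1 _ _ _ _ _
  zero_add _ := h.1.2.2 _ _
  add_zero _ := h.1.2.1 _ _
  neg_add_cancel a := (h.1.1 e a e e a).trans (by rw [h.1.2.2]; exact h.1.2.1 e a)
  add_comm _ _ := h.2 _ _ _
  nsmul := @nsmulRec H ⟨e⟩ ⟨fun a b => op a e b⟩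
  zsmul := @zsmulRec H ⟨e⟩ ⟨fun a b => op a e b⟩ ⟨fun a => op e a e⟩
    (@nsmulRec H ⟨e⟩ ⟨fun a b => op a e b⟩)

theorem IsAbelianHeap.exists_addCommGroup {H : Type*} {op : H → H → H → H}
    (h : IsAbelianHeap op) (e : H) :
    ∃ _ : AddCommGroup H, (0 : H) = e ∧ op = addHeap H := by
  refine ⟨h.retract e, rfl, ?_⟩
  funext a b c
  calc op a b c = op (op a e (op e b e)) e c := by rw [← h.1.1, h.1.2.1, h.1.1, h.1.2.2]
    _ = @addHeap H (h.retract e) a b c :=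
      congrArg (op · e c) (@sub_eq_add_neg H (h.retract e).toSubNegMonoid a b).symm

end AbelianHeap

section TrussModule

variable {R M : Type*} [Ring R]

theorem isTRMod_module (R V : Type*) [Ring R] [AddCommGroup V] [Module R V] :
    IsTRMod (addHeap V) (fun (r : R) (x : V) => r • x) :=
  ⟨isAbelianHeap_addHeap V, fun r s x => (mul_smul r s x).symm,
    fun r s t x => by simp only [add_smul, sub_smul],
    fun r x y z => by simp only [smul_add, smul_sub], one_smul R⟩

theorem isTRMod_trivial (R B : Type*) [Ring R] [AddCommGroup B] :
    IsTRMod (addHeap B) (fun (_ : R) (x : B) => x) :=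
  ⟨isAbelianHeap_addHeap B, fun _ _ _ => rfl, fun _ _ _ x => by simp, fun _ _ _ _ => rfl,
    fun _ => rfl⟩

theorem IsTRModHom.comp {N P : Type*} {opM : M → M → M → M} {smM : R → M → M}
    {opN : N → N → N → N} {smN : R → N → N} {opP : P → P → P → P} {smP : R → P → P}
    {g : N → P} {f : M → N} (hg : IsTRModHom opN smN opP smP g)
    (hf : IsTRModHom opM smM opN smN f) : IsTRModHom opM smM opP smP (g ∘ f) :=
  ⟨fun a b c => (congrArg g (hf.1 a b c)).trans (hg.1 _ _ _),
    fun r a => (congrArg g (hf.2 r a)).trans (hg.2 _ _)⟩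

variable {op : M → M → M → M} {sm : R → M → M}

theorem IsTRModHom.apply_eq_act_apply_one {φ : R → M}
    (hφ : IsTRModHom (addHeap R) (fun r a : R => r * a) op sm φ) (r : R) :
    φ r = sm r (φ 1) := by
  simpa only [mul_one] using hφ.2 r 1

theorem IsTRMod.isTRModHom_orbit (hM : IsTRMod op sm) (m : M) :
    IsTRModHom (addHeap R) (fun r a : R => r * a) op sm (fun r => sm r m) :=
  ⟨fun a b c => hM.2.2.1 a b c m, fun r a => (hM.2.1 r a m).symm⟩

theorem IsTRMod.act_zero_mem_absSet (hM : IsTRMod op sm) (m : M) : sm 0 m ∈ absSet sm :=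
  fun r => by rw [hM.2.1, mul_zero]

theorem IsTRMod.op_mem_absSet (hM : IsTRMod op sm) {a b c : M} (ha : a ∈ absSet sm)
    (hb : b ∈ absSet sm) (hc : c ∈ absSet sm) : op a b c ∈ absSet sm :=
  fun r => by rw [hM.2.2.2.1, ha r, hb r, hc r]

theorem IsTRModHom.apply_eq_zero_of_mem_absSet {V : Type*} [AddCommGroup V]
    [Module R V] {f : M → V} (hf : IsTRModHom op sm (addHeap V) (fun (r : R) (x : V) => r • x) f)
    {a : M} (ha : a ∈ absSet sm) : f a = 0 := by
  simpa only [ha 0, zero_smul] using hf.2 0 a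

end TrussModule

section Pointed

variable {R M : Type*} [Ring R] [AddCommGroup M] {sm : R → M → M}

/-- A heap morphism between Abelian groups that preserves zero, as a group homomorphism. -/
def addMonoidHomOfHeap {N : Type*} [AddCommGroup N] (f : M → N)
    (hf : ∀ a b c, f (addHeap M a b c) = addHeap N (f a) (f b) (f c)) (h0 : f 0 = 0) : M →+ N where
  toFun := f
  map_zero' := h0
  map_add' a b := by simpa [addHeap, h0] using hf a 0 b

namespace IsTRMod

variable (hM : IsTRMod (addHeap M) sm) (h0 : (0 : M) ∈ absSet sm)

/-- The action of `r` as an endomorphism of the retract of a `T(R)`-module at an absorber. -/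
def actHom (r : R) : M →+ M :=
  addMonoidHomOfHeap (sm r) (hM.2.2.2.1 r) (h0 r)

/-- The absorbers `Abs(M)` as a subgroup of the retract of `M` at one of them. -/
def absorbers : AddSubgroup M where
  carrier := absSet sm
  zero_mem' := h0
  add_mem' ha hb := by simpa [addHeap] using hM.op_mem_absSet ha h0 hb
  neg_mem' ha := by simpa [addHeap] using hM.op_mem_absSet h0 ha h0

theorem isTRModHom_act_zero :
    IsTRModHom (addHeap M) sm (addHeap (hM.absorbers h0)) (fun (_ : R) a => a)
      (fun m => ⟨sm 0 m, hM.act_zero_mem_absSet m⟩) :=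
  ⟨fun a b c => Subtype.ext (hM.2.2.2.1 0 a b c),
    fun r m => Subtype.ext ((hM.2.1 0 r m).trans (by rw [zero_mul]))⟩

theorem exists_module_quotient :
    ∃ _ : Module R (M ⧸ hM.absorbers h0),
      ∀ (r : R) (m : M), r • (m : M ⧸ hM.absorbers h0) = (sm r m : M ⧸ hM.absorbers h0) := by
  have act_add (r s : R) (m : M) : sm (r + s) m = sm r m - sm 0 m + sm s m := by
    simpa only [sub_zero] using hM.2.2.1 r 0 s m
  have mk_act_zero (m : M) : (sm 0 m : M ⧸ hM.absorbers h0) = 0 :=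
    (QuotientAddGroup.eq_zero_iff _).2 (hM.act_zero_mem_absSet m)
  have absorbers_le_comap (r : R) :
      hM.absorbers h0 ≤ (hM.absorbers h0).comap (hM.actHom h0 r) :=
    fun a ha => show sm r a ∈ absSet sm from (ha r).symm ▸ ha
  let act (r : R) : M ⧸ hM.absorbers h0 →+ M ⧸ hM.absorbers h0 :=
    QuotientAddGroup.map _ _ (hM.actHom h0 r) (absorbers_le_comap r)
  exact ⟨
    { smul := fun r => act r
      smul_zero := fun r => map_zero (act r)
      smul_add := fun r => map_add (act r)
      one_smul := by
        rintro ⟨m⟩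
        exact congrArg _ (hM.2.2.2.2 m)
      mul_smul := by
        rintro r s ⟨m⟩
        exact congrArg _ (hM.2.1 r s m).symm
      add_smul := by
        rintro r s ⟨m⟩
        calc ((sm (r + s) m : M) : M ⧸ hM.absorbers h0)
            = sm r m - sm 0 m + sm s m := by rw [act_add]; rfl
          _ = sm r m + sm s m := by rw [mk_act_zero, sub_zero]
      zero_smul := by
        rintro ⟨m⟩
        exact mk_act_zero m }, fun _ _ => rfl⟩

theorem setoid_eq_leftRel_absorbers {st : Setoid M}
    (hst : ∀ x y : M, st.r x y ↔ ∃ s ∈ absSet sm, addHeap M x y s ∈ absSet sm) :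
    st = QuotientAddGroup.leftRel (hM.absorbers h0) := by
  ext x y
  rw [QuotientAddGroup.leftRel_apply, ← neg_mem_iff, neg_add_rev, neg_neg, neg_add_eq_sub]
  refine (hst x y).trans ⟨?_, fun hxy => ⟨0, h0, ?_⟩⟩
  · rintro ⟨s, hs, hxys⟩
    exact (add_mem_cancel_right (show s ∈ hM.absorbers h0 from hs)).1 hxys
  · change x - y + 0 ∈ hM.absorbers h0
    rwa [add_zero]

variable {hM h0} in
theorem exists_bijective_retract {F : Type*} [AddCommGroup F] (ε : hM.absorbers h0 ≃+ F)
    {a : M} (ha : a ∈ absSet sm) :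
    ∃ φ : absSet sm → F, Function.Bijective φ ∧
      ∀ (s t : absSet sm) (h : addHeap M s a t ∈ absSet sm),
        φ ⟨addHeap M s a t, h⟩ = φ s + φ t := by
  let a' : hM.absorbers h0 := ⟨a, ha⟩
  have ε_heap (s t : hM.absorbers h0) : ε (s - a' + t) - ε a' = (ε s - ε a') + (ε t - ε a') := by
    rw [map_add, map_sub]
    abel
  exact ⟨_, (ε.toEquiv.trans (Equiv.subRight (ε a'))).bijective, fun s t _ => ε_heap s t⟩

end IsTRMod

end Pointed

section Free

variable {R : Type v} {I : Type w} [Ring R]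

/-- `(C, op, sm)` is the free `T(R)`-module on the family `x`, tested against the `T(R)`-modules in
the universe of `C`. -/
def IsTRFree {C : Type u} (op : C → C → C → C) (sm : R → C → C) (x : I → C) : Prop :=
  ∀ (H : Type u) (opH : H → H → H → H) (smH : R → H → H), IsTRMod opH smH → ∀ y : I → H,
    ∃! ξ : C → H, IsTRModHom op sm opH smH ξ ∧ ∀ i, ξ (x i) = y i

variable {C : Type u}

theorem IsTRFree.of_coproduct {op : C → C → C → C} {sm : R → C → C} {ι : I → R → C}
    (hι : ∀ i, IsTRModHom (addHeap R) (fun r a : R => r * a) op sm (ι i))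
    (huniv : ∀ (H : Type u) (opH : H → H → H → H) (smH : R → H → H),
      IsTRMod opH smH → ∀ φ : I → R → H,
        (∀ i, IsTRModHom (addHeap R) (fun r a : R => r * a) opH smH (φ i)) →
        ∃! ξ : C → H, IsTRModHom op sm opH smH ξ ∧ ∀ i, ξ ∘ ι i = φ i) :
    IsTRFree op sm (fun i => ι i 1) := by
  intro H opH smH hH y
  have comp_eq_orbit_iff {ξ : C → H} (hξ : IsTRModHom op sm opH smH ξ) (i : I) :
      ξ ∘ ι i = (fun r => smH r (y i)) ↔ ξ (ι i 1) = y i := by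
    refine ⟨fun h => (congrFun h 1).trans (hH.2.2.2.2 _), fun h => funext fun r => ?_⟩
    rw [← h]
    exact (hξ.comp (hι i)).apply_eq_act_apply_one r
  exact (existsUnique_congr fun ξ => and_congr_right fun hξ => forall_congr' fun i =>
    comp_eq_orbit_iff hξ i).1 (huniv H opH smH hH _ fun i => hH.isTRModHom_orbit (y i))

theorem IsTRFree.hom_ext {op : C → C → C → C} {sm : R → C → C} {x : I → C}
    (hx : IsTRFree op sm x) {H : Type u} {opH : H → H → H → H} {smH : R → H → H}
    (hH : IsTRMod opH smH) {f g : C → H} (hf : IsTRModHom op sm opH smH f)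
    (hg : IsTRModHom op sm opH smH g) (hfg : ∀ i, f (x i) = g (x i)) : f = g :=
  (hx H opH smH hH fun i => g (x i)).unique ⟨hf, hfg⟩ ⟨hg, fun _ => rfl⟩

variable [AddCommGroup C] {sm : R → C → C} {x : I → C}
  (hC : IsTRMod (addHeap C) sm) (h0 : (0 : C) ∈ absSet sm)

theorem IsTRFree.nonempty_absorbers_addEquiv (hx : IsTRFree (addHeap C) sm x) {J : Type*}
    (e : I ≃ Option J) (hx0 : sm 0 (x (e.symm none)) = 0) {F : Type u} [AddCommGroup F]
    (b : Basis J ℤ F) : Nonempty (hC.absorbers h0 ≃+ F) := by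
  obtain ⟨f, ⟨hf, hfx⟩, -⟩ := hx F _ _ (isTRMod_trivial R F) fun i => (e i).elim 0 b
  have f_act_zero (c : C) : f (sm 0 c) = f c := hf.2 0 c
  have f_zero : f 0 = 0 := by rw [← hx0, f_act_zero, hfx, e.apply_symm_apply, Option.elim_none]
  let p (c : C) : hC.absorbers h0 := ⟨sm 0 c, hC.act_zero_mem_absSet c⟩
  let fAbs : hC.absorbers h0 →+ F :=
    (addMonoidHomOfHeap f hf.1 f_zero).comp (hC.absorbers h0).subtype
  let g : F →ₗ[ℤ] hC.absorbers h0 := b.constr ℤ fun j => p (x (e.symm (some j)))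
  have hg : IsTRModHom (addHeap F) (fun (_ : R) v => v) (addHeap _) (fun (_ : R) a => a) g :=
    ⟨fun a b c => by simp only [addHeap, map_add, map_sub], fun _ _ => rfl⟩
  have g_f : g ∘ f = p := by
    refine hx.hom_ext (isTRMod_trivial R _) (hg.comp hf) (hC.isTRModHom_act_zero h0)
      (e.symm.surjective.forall.2 ?_)
    rintro (_ | j)
    · rw [Function.comp_apply, hfx, e.apply_symm_apply, Option.elim_none, map_zero]
      exact Subtype.ext hx0.symm
    · rw [Function.comp_apply, hfx, e.apply_symm_apply, Option.elim_some, b.constr_basis]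
  have f_g : fAbs.toIntLinearMap ∘ₗ g = LinearMap.id := b.ext fun j => by
    calc fAbs (g (b j)) = f (sm 0 (x (e.symm (some j)))) := by rw [b.constr_basis]; rfl
      _ = b j := by rw [f_act_zero, hfx, e.apply_symm_apply, Option.elim_some]
  exact ⟨{ fAbs with
    invFun := g
    left_inv := fun a => (congrFun g_f a).trans (Subtype.ext (a.2 0))
    right_inv := LinearMap.congr_fun f_g }⟩

theorem IsTRFree.nonempty_quotient_linearEquiv (hx : IsTRFree (addHeap C) sm x)
    [Module R (C ⧸ hC.absorbers h0)]
    (hsmul : ∀ (r : R) (c : C), r • (c : C ⧸ hC.absorbers h0) = (sm r c : C ⧸ hC.absorbers h0))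
    {V : Type u} [AddCommGroup V] [Module R V] (b : Basis I R V) :
    Nonempty ((C ⧸ hC.absorbers h0) ≃ₗ[R] V) := by
  obtain ⟨f, ⟨hf, hfx⟩, -⟩ := hx V _ _ (isTRMod_module R V) b
  let fQuot : (C ⧸ hC.absorbers h0) →ₗ[R] V :=
    { QuotientAddGroup.lift (hC.absorbers h0)
        (addMonoidHomOfHeap f hf.1 (hf.apply_eq_zero_of_mem_absSet h0))
        (fun _ ha => hf.apply_eq_zero_of_mem_absSet ha) with
      map_smul' := by
        rintro r ⟨c⟩
        exact (congrArg _ (hsmul r c)).trans (hf.2 r c) }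
  let g : V →ₗ[R] C ⧸ hC.absorbers h0 := b.constr ℤ fun i => (x i : C ⧸ hC.absorbers h0)
  have hg : IsTRModHom (addHeap V) (fun (r : R) v => r • v) (addHeap _) (fun r q => r • q) g :=
    ⟨fun a b c => by simp only [addHeap, map_add, map_sub], map_smul g⟩
  have hmk : IsTRModHom (addHeap C) sm (addHeap _) (fun (r : R) q => r • q)
      ((↑) : C → C ⧸ hC.absorbers h0) :=
    ⟨fun _ _ _ => rfl, fun r c => (hsmul r c).symm⟩
  have g_f : g ∘ f = ((↑) : C → C ⧸ hC.absorbers h0) :=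
    hx.hom_ext (isTRMod_module R _) (hg.comp hf) hmk fun i => by
      rw [Function.comp_apply, hfx, b.constr_basis]
  refine ⟨LinearEquiv.ofLinearMap fQuot g (b.ext fun i => ?_) (LinearMap.ext ?_)⟩
  · calc fQuot (g (b i)) = f (x i) := by rw [b.constr_basis]; rfl
      _ = b i := hfx i
  · rintro ⟨c⟩
    exact congrFun g_f c

end Free

theorem free_truss_module_absorbers_and_quotient_general {R : Type v} [Ring R]
    {I : Type w} {J : Type*} (e : I ≃ Option J) {C : Type u} (opC : C → C → C → C)
    (smC : R → C → C) (hC : IsTRMod opC smC) (ι : I → R → C)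
    (hι : ∀ i : I, IsTRModHom (fun a b c : R => a - b + c)
      (fun r a : R => r * a) opC smC (ι i))
    (huniv : ∀ (H : Type u) (opH : H → H → H → H) (smH : R → H → H),
      IsTRMod opH smH → ∀ φ : I → R → H,
        (∀ i : I, IsTRModHom (fun a b c : R => a - b + c)
          (fun r a : R => r * a) opH smH (φ i)) →
        ∃! ξ : C → H, IsTRModHom opC smC opH smH ξ ∧ ∀ i : I, ξ ∘ ι i = φ i)
    {F : Type u} [AddCommGroup F] (bF : Basis J ℤ F)
    {V : Type u} [AddCommGroup V] [Module R V] (bV : Basis I R V) :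
    ((absSet smC).Nonempty ∧
      (∀ a ∈ absSet smC, ∀ b ∈ absSet smC, ∀ c ∈ absSet smC,
        opC a b c ∈ absSet smC) ∧
      (∀ a ∈ absSet smC,
        ∃ φ : absSet smC → F, Function.Bijective φ ∧
          ∀ (s t : absSet smC) (h : opC (s : C) a (t : C) ∈ absSet smC),
            φ ⟨opC (s : C) a (t : C), h⟩ = φ s + φ t)) ∧
    (∀ st : Setoid C,
      (∀ x y : C, st.r x y ↔ ∃ s ∈ absSet smC, opC x y s ∈ absSet smC) →
      ∃ (_ : AddCommGroup (Quotient st)) (_ : Module R (Quotient st)),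
        (∀ s ∈ absSet smC, (0 : Quotient st) = Quotient.mk st s) ∧
        (∀ x y : C, ∀ s ∈ absSet smC,
          Quotient.mk st x + Quotient.mk st y = Quotient.mk st (opC x s y)) ∧
        (∀ (r : R) (x : C),
          r • Quotient.mk st x = Quotient.mk st (smC r x)) ∧
        Nonempty (Quotient st ≃ₗ[R] V)) := by
  have hfree := IsTRFree.of_coproduct hι huniv
  obtain ⟨_, hzero, rfl⟩ := hC.1.exists_addCommGroup (smC 0 (ι (e.symm none) 1))
  have h0 : (0 : C) ∈ absSet smC := hzero ▸ hC.act_zero_mem_absSet _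
  obtain ⟨ε⟩ := hfree.nonempty_absorbers_addEquiv hC h0 e hzero.symm bF
  refine ⟨⟨⟨0, h0⟩, fun a ha b hb c hc => hC.op_mem_absSet ha hb hc,
    fun a ha => IsTRMod.exists_bijective_retract ε ha⟩, fun st hst => ?_⟩
  obtain rfl := hC.setoid_eq_leftRel_absorbers h0 hst
  obtain ⟨hmod, hsmul⟩ := hC.exists_module_quotient h0
  have mk_eq_zero {s : C} (hs : s ∈ absSet smC) : (s : C ⧸ hC.absorbers h0) = 0 :=
    (QuotientAddGroup.eq_zero_iff s).2 hs
  refine ⟨inferInstanceAs (AddCommGroup (C ⧸ hC.absorbers h0)), hmod,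
    fun s hs => (mk_eq_zero hs).symm, fun x y s hs => ?_, hsmul,
    hfree.nonempty_quotient_linearEquiv hC h0 hsmul bV⟩
  change (x + y : C ⧸ hC.absorbers h0) = x - s + y
  rw [mk_eq_zero hs, sub_zero]

/-- Let `R` be a unital ring, `n ≥ 1`, and `(C, (ι_i))` a
coproduct in the category of unital `T(R)`-modules of `n` copies of `T(R)`.
Then: (i) the set `Abs(C)` of absorbers of `C` is a nonempty sub-heap of `C`
whose retract group at any `a ∈ Abs(C)` is isomorphic to `ℤ^(n-1)`;
(ii) the quotient heap `C/Abs(C)`, with zero the class `Abs(C)`, addition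
`[x̄, Abs(C), ȳ]` and the induced `R`-action, is a unital left `R`-module
isomorphic to the free `R`-module `R^n`. -/
theorem free_truss_module_absorbers_and_quotient {R : Type} [Ring R]
    (n : ℕ) (hn : 1 ≤ n) {C : Type} (opC : C → C → C → C) (smC : R → C → C)
    (hC : IsTRMod opC smC) (ι : Fin n → R → C)
    (hι : ∀ i : Fin n, IsTRModHom (fun a b c : R => a - b + c)
      (fun r a : R => r * a) opC smC (ι i))
    (huniv : ∀ (H : Type) (opH : H → H → H → H) (smH : R → H → H),
      IsTRMod opH smH → ∀ φ : Fin n → R → H,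
        (∀ i : Fin n, IsTRModHom (fun a b c : R => a - b + c)
          (fun r a : R => r * a) opH smH (φ i)) →
        ∃! ξ : C → H, IsTRModHom opC smC opH smH ξ ∧ ∀ i : Fin n, ξ ∘ ι i = φ i) :
    -- (i) the absorbers form a nonempty sub-heap with retract group `ℤ^(n-1)`
    ((absSet smC).Nonempty ∧
      (∀ a ∈ absSet smC, ∀ b ∈ absSet smC, ∀ c ∈ absSet smC,
        opC a b c ∈ absSet smC) ∧
      (∀ a : C, ∀ ha : a ∈ absSet smC,
        ∃ φ : absSet smC → (Fin (n - 1) → ℤ), Function.Bijective φ ∧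
          ∀ (s t : absSet smC) (h : opC (s : C) a (t : C) ∈ absSet smC),
            φ ⟨opC (s : C) a (t : C), h⟩ = φ s + φ t)) ∧
    -- (ii) the quotient by the absorbers is a free `R`-module of rank `n`
    (∀ st : Setoid C,
      (∀ x y : C, st.r x y ↔ ∃ s ∈ absSet smC, opC x y s ∈ absSet smC) →
      ∃ (_ : AddCommGroup (Quotient st)) (_ : Module R (Quotient st)),
        (∀ s ∈ absSet smC, (0 : Quotient st) = Quotient.mk st s) ∧
        (∀ x y : C, ∀ s ∈ absSet smC,
          Quotient.mk st x + Quotient.mk st y = Quotient.mk st (opC x s y)) ∧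
        (∀ (r : R) (x : C),
          r • Quotient.mk st x = Quotient.mk st (smC r x)) ∧
        Nonempty (Quotient st ≃ₗ[R] (Fin n → R))) := by
  obtain ⟨m, rfl⟩ := Nat.exists_eq_add_of_le' hn
  exact free_truss_module_absorbers_and_quotient_general (finSuccEquiv m) opC smC hC ι hι huniv
    (Pi.basisFun ℤ (Fin m)) (Pi.basisFun R (Fin (m + 1)))
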